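/- Let Σ_θ and Σ_n be symmetric positive definite N×N real matrices. Then every entry of ΔΣ = Σ_θ⁻¹ − (Σ_θ + Σ_n)⁻¹ satisfies |ΔΣ(i,j)| ≤ σ_max(Σ_n) / σ_min(Σ_θ)², where σ_max, σ_min denote the largest and smallest eigenvalues. -/

import Mathlib

open Finset

/-!
Work in the L² operator norm. If `m > 0` is a lower bound for both `a` and `b` in the Loewner
order, then `a⁻¹` and `b⁻¹` have norm at most `m⁻¹`, so `a⁻¹ - b⁻¹ = a⁻¹ (b - a) b⁻¹` has norm at
most `‖b - a‖ / m²`. Apply this to `a = Σθ` and `b = Σθ + Σn`, with `m` the smallest eigenvalue of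
`Σθ`; the entries of a matrix are bounded by its operator norm.
-/

section CFC

variable {A : Type*} [TopologicalSpace A] [Ring A] [StarRing A] [Algebra ℝ A]
  [ContinuousFunctionalCalculus ℝ A IsSelfAdjoint]
  [PartialOrder A] [StarOrderedRing A] {a : A} {m : ℝ}

theorem isSelfAdjoint_of_algebraMap_le (h : algebraMap ℝ A m ≤ a) : IsSelfAdjoint a :=
  .of_ge h (cfc_predicate_algebraMap m)

theorem isUnit_of_algebraMap_le [NonnegSpectrumClass ℝ A] (hm : 0 < m) (h : algebraMap ℝ A m ≤ a) :
    IsUnit a := by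
  have ha : IsSelfAdjoint a := isSelfAdjoint_of_algebraMap_le h
  exact spectrum.isUnit_of_zero_notMem ℝ fun h0 ↦
    hm.not_ge ((algebraMap_le_iff_le_spectrum ha).mp h 0 h0)

end CFC

section IsometricCFC

open scoped Ring

variable {A : Type*} [NormedRing A] [StarRing A] [NormedAlgebra ℝ A]
  [IsometricContinuousFunctionalCalculus ℝ A IsSelfAdjoint]
  [PartialOrder A] [StarOrderedRing A] [NonnegSpectrumClass ℝ A] {a b : A} {m c : ℝ}

theorem norm_le_of_nonneg_of_le_algebraMap (hc : 0 ≤ c) (ha : 0 ≤ a)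
    (hac : a ≤ algebraMap ℝ A c) : ‖a‖ ≤ c := by
  have ha_sa : IsSelfAdjoint a := .of_nonneg ha
  rw [← cfc_id ℝ a]
  refine norm_cfc_le hc fun x hx ↦ ?_
  rw [id, Real.norm_of_nonneg (spectrum_nonneg_of_nonneg ha hx)]
  exact (le_algebraMap_iff_spectrum_le ha_sa).mp hac x hx

theorem norm_ringInverse_le_inv (hm : 0 < m) (h : algebraMap ℝ A m ≤ a) : ‖a⁻¹ʳ‖ ≤ m⁻¹ := by
  have ha : IsSelfAdjoint a := isSelfAdjoint_of_algebraMap_le h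
  rw [← cfc_ringInverse_id (R := ℝ) a (isUnit_of_algebraMap_le hm h)]
  refine norm_cfc_le (inv_nonneg.mpr hm.le) fun x hx ↦ ?_
  have hmx : m ≤ x := (algebraMap_le_iff_le_spectrum ha).mp h x hx
  rw [norm_inv, Real.norm_of_nonneg (hm.le.trans hmx)]
  exact inv_anti₀ hm hmx

theorem norm_ringInverse_sub_ringInverse_le (hm : 0 < m) (ha : algebraMap ℝ A m ≤ a)
    (hb : algebraMap ℝ A m ≤ b) : ‖a⁻¹ʳ - b⁻¹ʳ‖ ≤ ‖b - a‖ / m ^ 2 :=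
  calc ‖a⁻¹ʳ - b⁻¹ʳ‖ = ‖a⁻¹ʳ * (b - a) * b⁻¹ʳ‖ := by
        rw [Ring.inverse_sub_inverse
          (iff_of_true (isUnit_of_algebraMap_le hm ha) (isUnit_of_algebraMap_le hm hb))]
    _ ≤ ‖a⁻¹ʳ‖ * ‖b - a‖ * ‖b⁻¹ʳ‖ := norm_mul₃_le
    _ ≤ m⁻¹ * ‖b - a‖ * m⁻¹ := by
        gcongr
        · exact norm_ringInverse_le_inv hm ha
        · exact norm_ringInverse_le_inv hm hb
    _ = ‖b - a‖ / m ^ 2 := by field_simp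

end IsometricCFC

section Matrix

open scoped ComplexOrder MatrixOrder Matrix.Norms.L2Operator

variable {𝕜 l n : Type*} [RCLike 𝕜] [Fintype l] [Fintype n] [DecidableEq n]

theorem norm_apply_le_l2_opNorm (A : Matrix l n 𝕜) (i : l) (j : n) : ‖A i j‖ ≤ ‖A‖ := by
  simpa using (PiLp.norm_apply_le _ i).trans
    (A.l2_opNorm_mulVec (EuclideanSpace.single j (1 : 𝕜)))

/-- Mathlib provides this normed algebra structure only over `𝕜` itself. Spectra are taken over `ℝ`,
so the continuous functional calculus needs it over `ℝ`. -/
noncomputable local instance l2OpNormedAlgebraReal : NormedAlgebra ℝ (Matrix n n 𝕜) where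
  norm_smul_le r A := by
    simpa only [RCLike.real_smul_eq_coe_smul (K := 𝕜), RCLike.norm_ofReal, Real.norm_eq_abs] using
      norm_smul_le (r : 𝕜) A

variable {A S T : Matrix n n 𝕜}

theorem le_algebraMap_iff_eigenvalues_le (hA : A.IsHermitian) {c : ℝ} :
    A ≤ algebraMap ℝ _ c ↔ ∀ i, hA.eigenvalues i ≤ c := by
  rw [le_algebraMap_iff_spectrum_le hA, hA.spectrum_real_eq_range_eigenvalues,
    Set.forall_mem_range]

theorem algebraMap_le_iff_le_eigenvalues (hA : A.IsHermitian) {c : ℝ} :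
    algebraMap ℝ _ c ≤ A ↔ ∀ i, c ≤ hA.eigenvalues i := by
  rw [algebraMap_le_iff_le_spectrum hA, hA.spectrum_real_eq_range_eigenvalues,
    Set.forall_mem_range]

variable [Nonempty n]

theorem l2_opNorm_le_sup'_eigenvalues (hA : A.PosSemidef) :
    ‖A‖ ≤ univ.sup' univ_nonempty hA.1.eigenvalues := by
  obtain ⟨i⟩ := ‹Nonempty n›
  exact norm_le_of_nonneg_of_le_algebraMap
    ((hA.eigenvalues_nonneg i).trans (le_sup' _ (mem_univ i)))
    (Matrix.nonneg_iff_posSemidef.mpr hA)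
    ((le_algebraMap_iff_eigenvalues_le hA.1).mpr fun i ↦ le_sup' _ (mem_univ i))

theorem l2_opNorm_inv_sub_inv_add_le (hS : S.PosDef) (hT : T.PosSemidef) :
    ‖S⁻¹ - (S + T)⁻¹‖ ≤ ‖T‖ / (univ.inf' univ_nonempty hS.1.eigenvalues) ^ 2 := by
  set m := univ.inf' univ_nonempty hS.1.eigenvalues
  have hm : 0 < m := (lt_inf'_iff _).mpr fun i _ ↦ hS.eigenvalues_pos i
  have hmS : algebraMap ℝ _ m ≤ S :=
    (algebraMap_le_iff_le_eigenvalues hS.1).mpr fun i ↦ inf'_le _ (mem_univ i)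
  have hmST : algebraMap ℝ _ m ≤ S + T :=
    le_add_of_le_of_nonneg hmS (Matrix.nonneg_iff_posSemidef.mpr hT)
  simpa only [Matrix.nonsing_inv_eq_ringInverse, add_sub_cancel_left] using
    norm_ringInverse_sub_ringInverse_le hm hmS hmST

theorem delta_inverse_entry_bound_general (hS : S.PosDef) (hT : T.PosSemidef) (i j : n) :
    ‖(S⁻¹ - (S + T)⁻¹) i j‖ ≤
      (univ.sup' univ_nonempty hT.1.eigenvalues) /
        (univ.inf' univ_nonempty hS.1.eigenvalues) ^ 2 :=
  calc ‖(S⁻¹ - (S + T)⁻¹) i j‖ ≤ ‖S⁻¹ - (S + T)⁻¹‖ := norm_apply_le_l2_opNorm _ i j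
    _ ≤ ‖T‖ / (univ.inf' univ_nonempty hS.1.eigenvalues) ^ 2 := l2_opNorm_inv_sub_inv_add_le hS hT
    _ ≤ (univ.sup' univ_nonempty hT.1.eigenvalues) /
        (univ.inf' univ_nonempty hS.1.eigenvalues) ^ 2 := by
      gcongr
      exact l2_opNorm_le_sup'_eigenvalues hT

end Matrix

/-- For symmetric positive definite `Σθ`, `Σn`, every entry of
`ΔΣ = Σθ⁻¹ − (Σθ + Σn)⁻¹` satisfies `|ΔΣ(i,j)| ≤ σ_max(Σn) / σ_min(Σθ)²`, where
`σ_max`/`σ_min` are largest/smallest eigenvalues. -/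
theorem delta_inverse_entry_bound {N : ℕ} [NeZero N]
    (St Sn : Matrix (Fin N) (Fin N) ℝ) (hSt : St.PosDef) (hSn : Sn.PosDef) :
    ∀ i j, |(St⁻¹ - (St + Sn)⁻¹) i j| ≤
      (univ.sup' univ_nonempty hSn.1.eigenvalues) /
        (univ.inf' univ_nonempty hSt.1.eigenvalues) ^ 2 :=
  delta_inverse_entry_bound_general hSt hSn.posSemidef
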